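/- Let L be a symmetric positive semidefinite real n×n matrix such that I − L is also positive semidefinite, let P = I − L, and let E(H) = trace(Hᵀ L H). Then for every real n×d matrix X and every natural number l, the energy of the propagated features is dominated by the cross term: E(P^l X) ≤ trace(Xᵀ L P^l X). -/

import Mathlib

open Matrix BigOperators

/-!
Write `P = 1 - L` and `⟨X, Y⟩ = trace (Xᴴ L Y)`. Since `P` is Hermitian and commutes with `L`, one
of the two factors `P ^ l` in the energy moves across the form:
`⟨P ^ l X, P ^ l X⟩ = ⟨X, P ^ (2l) X⟩`.
It remains to see that `k ↦ ⟨X, P ^ k X⟩` is decreasing, and its decrements are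
`⟨X, P ^ k L X⟩ = trace ((L X)ᴴ P ^ k (L X))`, nonnegative because `P ^ k` is positive semidefinite.
-/

section DirichletForm

variable {R n d : Type*} [Fintype n] [Fintype d]

/-- The sesquilinear form `trace (Xᴴ L Y)` on feature matrices. The Dirichlet energy of `X` is its
value at `(X, X)`, and the cross term of `X` with its propagation `Y` is its value at `(X, Y)`. -/
def dirichletForm [NonUnitalNonAssocSemiring R] [Star R] (L : Matrix n n R) (X Y : Matrix n d R) :
    R :=
  (Xᴴ * L * Y).trace

theorem dirichletForm_sub_right [NonUnitalNonAssocRing R] [Star R] (L : Matrix n n R)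
    (X Y Z : Matrix n d R) :
    dirichletForm L X (Y - Z) = dirichletForm L X Y - dirichletForm L X Z := by
  simp only [dirichletForm, Matrix.mul_sub, trace_sub]

theorem dirichletForm_mul_left [NonUnitalSemiring R] [StarRing R] (L A : Matrix n n R)
    (X Y : Matrix n d R) :
    dirichletForm L (A * X) Y = dirichletForm (Aᴴ * L) X Y := by
  simp only [dirichletForm, conjTranspose_mul, Matrix.mul_assoc]

theorem dirichletForm_mul_right [NonUnitalSemiring R] [Star R] (L A : Matrix n n R)
    (X Y : Matrix n d R) :
    dirichletForm L X (A * Y) = dirichletForm (L * A) X Y := by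
  simp only [dirichletForm, Matrix.mul_assoc]

theorem dirichletForm_self_nonneg [Ring R] [PartialOrder R] [StarRing R] [AddLeftMono R]
    {L : Matrix n n R} (hL : L.PosSemidef) (X : Matrix n d R) : 0 ≤ dirichletForm L X X :=
  (hL.conjTranspose_mul_mul_same X).trace_nonneg

theorem dirichletForm_mul_left_eq_mul_right [NonUnitalSemiring R] [StarRing R]
    {L A : Matrix n n R} (hA : A.IsHermitian) (hAL : Commute A L) (X Y : Matrix n d R) :
    dirichletForm L (A * X) Y = dirichletForm L X (A * Y) := by
  rw [dirichletForm_mul_left, dirichletForm_mul_right, hA.eq, hAL.eq]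

end DirichletForm

theorem isHermitian_of_isHermitian_one_sub {R n : Type*} [NonAssocRing R] [StarRing R]
    [DecidableEq n] {L : Matrix n n R} (hP : (1 - L).IsHermitian) : L.IsHermitian := by
  simpa only [sub_sub_cancel] using isHermitian_one.sub hP

theorem commute_one_sub_pow_self {R : Type*} [Ring R] (a : R) (k : ℕ) : Commute ((1 - a) ^ k) a :=
  ((Commute.one_left a).sub_left (Commute.refl a)).pow_left k

section Propagation

variable {R n d : Type*} [Ring R] [StarRing R] [Fintype n] [DecidableEq n] [Fintype d]
  {L : Matrix n n R}

theorem dirichletForm_propagate_self (hP : (1 - L).IsHermitian) (X : Matrix n d R) (l : ℕ) :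
    dirichletForm L ((1 - L) ^ l * X) ((1 - L) ^ l * X) =
      dirichletForm L X ((1 - L) ^ (l + l) * X) := by
  rw [dirichletForm_mul_left_eq_mul_right (hP.pow l) (commute_one_sub_pow_self L l),
    ← Matrix.mul_assoc, ← pow_add]

theorem dirichletForm_propagate_sub_succ (hL : L.IsHermitian) (X : Matrix n d R) (k : ℕ) :
    dirichletForm L X ((1 - L) ^ k * X) - dirichletForm L X ((1 - L) ^ (k + 1) * X) =
      dirichletForm ((1 - L) ^ k) (L * X) (L * X) := by
  have decrement : (1 - L) ^ k - (1 - L) ^ (k + 1) = (1 - L) ^ k * L := by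
    rw [pow_succ, mul_sub, mul_one, sub_sub_cancel]
  rw [← dirichletForm_sub_right, ← Matrix.sub_mul, decrement, dirichletForm_mul_right,
    dirichletForm_mul_left, dirichletForm_mul_right, hL.eq, Matrix.mul_assoc]

variable [PartialOrder R] [StarOrderedRing R]

theorem antitone_dirichletForm_propagate (hP : (1 - L).PosSemidef) (X : Matrix n d R) :
    Antitone fun k : ℕ => dirichletForm L X ((1 - L) ^ k * X) := by
  refine antitone_nat_of_succ_le fun k => sub_nonneg.mp ?_
  rw [dirichletForm_propagate_sub_succ (isHermitian_of_isHermitian_one_sub hP.isHermitian)]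
  exact dirichletForm_self_nonneg (hP.pow k) (L * X)

theorem energy_le_cross_term_general (hP : (1 - L).PosSemidef) (X : Matrix n d R) (l : ℕ) :
    dirichletForm L ((1 - L) ^ l * X) ((1 - L) ^ l * X) ≤ dirichletForm L X ((1 - L) ^ l * X) :=
  calc
    dirichletForm L ((1 - L) ^ l * X) ((1 - L) ^ l * X)
      = dirichletForm L X ((1 - L) ^ (l + l) * X) :=
        dirichletForm_propagate_self hP.isHermitian X l
    _ ≤ dirichletForm L X ((1 - L) ^ l * X) :=
        antitone_dirichletForm_propagate hP X (Nat.le_add_left l l)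

end Propagation

/-- `E(P^l X) ≤ trace(Xᵀ L P^l X)` when `L` and `I − L` are PSD and `P = I − L`. -/
theorem energy_le_cross_term (n d : ℕ) (L : Matrix (Fin n) (Fin n) ℝ)
    (hL : L.PosSemidef) (hIL : ((1 : Matrix (Fin n) (Fin n) ℝ) - L).PosSemidef)
    (P : Matrix (Fin n) (Fin n) ℝ) (hP : P = 1 - L)
    (X : Matrix (Fin n) (Fin d) ℝ) (l : ℕ) :
    ((P ^ l * X)ᵀ * L * (P ^ l * X)).trace ≤ (Xᵀ * L * (P ^ l * X)).trace := by
  subst hP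
  simpa only [dirichletForm, conjTranspose_eq_transpose_of_trivial] using
    energy_le_cross_term_general hIL X l
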